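/- Let l, r be projective partitions (on a and b points respectively) and h a (t(l), t(r))-mixing partition; set l ∗_h r = (l_u* ⊗ r_u*) h̃ (l_u ⊗ r_u) where h̃ fills h with identities appropriately. Then: (1) if l ∗_h r belongs to a category of partitions C, then l and r belong to C; (2) the assignment (l, r, h) ↦ l ∗_h r is injective; (3) l ∗_h r ⪯ l ⊗ r. -/

import Mathlib

/-- A two-row partition with `k` upper and `l` lower points, encoded as the
equivalence relation whose classes are the blocks. -/
abbrev PP (k l : ℕ) := Setoid (Fin k ⊕ Fin l)

/-- The involution `p*` (turning `p` upside down). -/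
def swapP {k l : ℕ} (p : PP k l) : PP l k := Setoid.comap Sum.swap p

/-- Disjoint union of two setoids. -/
def sumSetoid {α β : Type*} (s : Setoid α) (t : Setoid β) : Setoid (α ⊕ β) where
  r := Sum.LiftRel s.r t.r
  iseqv := by
    refine ⟨fun x => ?_, fun {x y} h => ?_, fun {x y z} h1 h2 => ?_⟩
    · cases x with
      | inl a => exact Sum.LiftRel.inl (s.iseqv.refl a)
      | inr b => exact Sum.LiftRel.inr (t.iseqv.refl b)
    · cases h with
      | inl h => exact Sum.LiftRel.inl (s.iseqv.symm h)
      | inr h => exact Sum.LiftRel.inr (t.iseqv.symm h)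
    · cases h1 with
      | inl h1 =>
        cases h2 with
        | inl h2 => exact Sum.LiftRel.inl (s.iseqv.trans h1 h2)
      | inr h1 =>
        cases h2 with
        | inr h2 => exact Sum.LiftRel.inr (t.iseqv.trans h1 h2)

/-- Reindexing equivalence for the horizontal concatenation (tensor product). -/
def tensorEquiv (k l k' l' : ℕ) :
    (Fin (k + k') ⊕ Fin (l + l')) ≃ ((Fin k ⊕ Fin l) ⊕ (Fin k' ⊕ Fin l')) :=
  (Equiv.sumCongr finSumFinEquiv.symm finSumFinEquiv.symm).trans
    (Equiv.sumSumSumComm (Fin k) (Fin k') (Fin l) (Fin l'))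

/-- Tensor product (horizontal concatenation) of partitions. -/
def tensorP {k l k' l' : ℕ} (p : PP k l) (q : PP k' l') : PP (k + k') (l + l') :=
  Setoid.comap (tensorEquiv k l k' l') (sumSetoid p q)

/-- The relation on `k ⊔ l ⊔ m` points generated by `p` (upper part) and `q` (lower part). -/
def midRel {k l m : ℕ} (p : PP k l) (q : PP l m) :
    (Fin k ⊕ (Fin l ⊕ Fin m)) → (Fin k ⊕ (Fin l ⊕ Fin m)) → Prop := fun x y =>
  (∃ a b : Fin k ⊕ Fin l, p.r a b ∧ x = Sum.map id Sum.inl a ∧ y = Sum.map id Sum.inl b) ∨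
  (∃ a b : Fin l ⊕ Fin m, q.r a b ∧ x = Sum.inr a ∧ y = Sum.inr b)

/-- The equivalence relation generated on `k ⊔ l ⊔ m` in the composition procedure. -/
def bigS {k l m : ℕ} (p : PP k l) (q : PP l m) : Setoid (Fin k ⊕ (Fin l ⊕ Fin m)) :=
  Relation.EqvGen.setoid (midRel p q)

/-- `compP q p` is the vertical composition `qp` (apply `p : P(k,l)` first, then `q : P(l,m)`). -/
def compP {k l m : ℕ} (q : PP l m) (p : PP k l) : PP k m :=
  Setoid.comap (Sum.map id Sum.inr) (bigS p q)

/-- `rlP q p` : the number of closed loops removed in the composition `qp`,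
i.e. the blocks of the generated relation consisting only of middle points. -/
noncomputable def rlP {k l m : ℕ} (q : PP l m) (p : PP k l) : ℕ :=
  Nat.card {c : Quotient (bigS p q) //
    ∀ x, Quotient.mk (bigS p q) x = c → ∃ b : Fin l, x = Sum.inr (Sum.inl b)}

/-- `b(p)` : number of blocks. -/
noncomputable def bP {k l : ℕ} (p : PP k l) : ℕ := Nat.card (Quotient p)

/-- `t(p)` : number of through-blocks (blocks meeting both rows). -/
noncomputable def tP {k l : ℕ} (p : PP k l) : ℕ :=
  Nat.card {c : Quotient p // (∃ a : Fin k, Quotient.mk p (Sum.inl a) = c) ∧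
    (∃ b : Fin l, Quotient.mk p (Sum.inr b) = c)}

/-- `β(p) = b(p) - t(p)` : number of non-through-blocks. -/
noncomputable def betaP {k l : ℕ} (p : PP k l) : ℕ := bP p - tP p

/-- The identity partition `|^{⊗k}`. -/
def idP (k : ℕ) : PP k k := Setoid.ker (Sum.elim (fun i : Fin k => i) (fun i : Fin k => i))

/-- A pair partition: all blocks have size two. -/
def isPair {k l : ℕ} (p : PP k l) : Prop := ∀ x, Nat.card {y // p.r x y} = 2

/-- A through-partition: a pair partition each of whose blocks connects exactly one
upper point to exactly one lower point. -/
def isThrough {k : ℕ} (p : PP k k) : Prop :=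
  isPair p ∧ (∀ a b : Fin k, p.r (Sum.inl a) (Sum.inl b) → a = b) ∧
    (∀ a b : Fin k, p.r (Sum.inr a) (Sum.inr b) → a = b)

/-- A building partition. -/
def isBuilding {k l : ℕ} (p : PP k l) : Prop :=
  (∀ b b' : Fin l, p.r (Sum.inr b) (Sum.inr b') → b = b') ∧
  (∀ b : Fin l, ∃ a : Fin k, p.r (Sum.inl a) (Sum.inr b)) ∧
  (∀ b b' : Fin l, ∀ a a' : Fin k, b < b' →
    IsLeast {x : Fin k | p.r (Sum.inl x) (Sum.inr b)} a →
    IsLeast {x : Fin k | p.r (Sum.inl x) (Sum.inr b')} a' → a < a')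

/-- A projective partition: symmetric and idempotent. -/
def isProjective {k : ℕ} (p : PP k k) : Prop := swapP p = p ∧ compP p p = p

/-- Linear position of the points, reading the upper row left to right and then the
lower row right to left. -/
def posP (k l : ℕ) : Fin k ⊕ Fin l → ℕ :=
  Sum.elim (fun i => (i : ℕ)) (fun j => k + (l - 1 - (j : ℕ)))

/-- Noncrossing partitions. -/
def isNC {k l : ℕ} (p : PP k l) : Prop :=
  ¬ ∃ x1 x2 x3 x4 : Fin k ⊕ Fin l,
    posP k l x1 < posP k l x2 ∧ posP k l x2 < posP k l x3 ∧ posP k l x3 < posP k l x4 ∧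
    p.r x1 x3 ∧ p.r x2 x4 ∧ ¬ p.r x1 x2

/-- Rotation of the leftmost upper point to the lower-left position: reindexing equivalence. -/
def rotEquivL (k l : ℕ) : (Fin k ⊕ Fin (l + 1)) ≃ (Fin (k + 1) ⊕ Fin l) :=
  (Equiv.sumCongr (Equiv.refl (Fin k))
      ((finCongr (Nat.add_comm l 1)).trans finSumFinEquiv.symm)).trans <|
    ((Equiv.sumAssoc (Fin k) (Fin 1) (Fin l)).symm).trans <|
      (Equiv.sumCongr (Equiv.sumComm (Fin k) (Fin 1)) (Equiv.refl (Fin l))).trans <|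
        (Equiv.sumCongr finSumFinEquiv (Equiv.refl (Fin l))).trans
          (Equiv.sumCongr (finCongr (Nat.add_comm 1 k)) (Equiv.refl (Fin l)))

/-- Rotation of the rightmost upper point to the lower-right position: reindexing equivalence. -/
def rotEquivR (k l : ℕ) : (Fin k ⊕ Fin (l + 1)) ≃ (Fin (k + 1) ⊕ Fin l) :=
  (Equiv.sumCongr (Equiv.refl (Fin k)) finSumFinEquiv.symm).trans <|
    (Equiv.sumCongr (Equiv.refl (Fin k)) (Equiv.sumComm (Fin l) (Fin 1))).trans <|
      ((Equiv.sumAssoc (Fin k) (Fin 1) (Fin l)).symm).trans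
        (Equiv.sumCongr finSumFinEquiv (Equiv.refl (Fin l)))

/-- A category of partitions: contains the identity partition and is closed under
tensor products, composition, involution and rotations. -/
structure PartitionCategory where
  mem : ∀ k l : ℕ, Set (PP k l)
  id_mem : idP 1 ∈ mem 1 1
  tensor_mem : ∀ {k l k' l' : ℕ} (p : PP k l) (q : PP k' l'),
    p ∈ mem k l → q ∈ mem k' l' → tensorP p q ∈ mem (k + k') (l + l')
  comp_mem : ∀ {k l m : ℕ} (q : PP l m) (p : PP k l),
    q ∈ mem l m → p ∈ mem k l → compP q p ∈ mem k m
  swap_mem : ∀ {k l : ℕ} (p : PP k l), p ∈ mem k l → swapP p ∈ mem l k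
  rotL_mem : ∀ {k l : ℕ} (p : PP (k + 1) l),
    p ∈ mem (k + 1) l → Setoid.comap (rotEquivL k l) p ∈ mem k (l + 1)
  rotL_mem' : ∀ {k l : ℕ} (p : PP k (l + 1)),
    p ∈ mem k (l + 1) → Setoid.comap (rotEquivL k l).symm p ∈ mem (k + 1) l
  rotR_mem : ∀ {k l : ℕ} (p : PP (k + 1) l),
    p ∈ mem (k + 1) l → Setoid.comap (rotEquivR k l) p ∈ mem k (l + 1)
  rotR_mem' : ∀ {k l : ℕ} (p : PP k (l + 1)),
    p ∈ mem k (l + 1) → Setoid.comap (rotEquivR k l).symm p ∈ mem (k + 1) l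

/-- The pair partition `r_σ` associated to a permutation `σ`, connecting the `i`-th
upper point to the `σ(i)`-th lower point. -/
def permP {m : ℕ} (σ : Equiv.Perm (Fin m)) : PP m m :=
  Setoid.ker (Sum.elim (fun i => σ i) (fun i : Fin m => i))

/-- The size of the block of `p` containing the point `x`. -/
noncomputable def blockSize {k l : ℕ} (p : PP k l) (x : Fin k ⊕ Fin l) : ℕ :=
  Nat.card {y // p.r x y}

/-- A `(k,l)`-mixing partition: a projective partition on `k+l` (doubled) points all of
whose blocks have size 2 or 4, with the prescribed forms. -/
def isMixing (k l : ℕ) (h : PP (k + l) (k + l)) : Prop :=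
  isProjective h ∧
  (∀ x, blockSize h x = 2 ∨ blockSize h x = 4) ∧
  (∀ x y, h.r x y → x ≠ y → blockSize h x = 2 →
    (∃ a : Fin (k + l), (x = Sum.inl a ∧ y = Sum.inr a) ∨ (x = Sum.inr a ∧ y = Sum.inl a)) ∨
    (∃ a b : Fin (k + l), (a : ℕ) < k ∧ k ≤ (b : ℕ) ∧
      ((x = Sum.inl a ∧ y = Sum.inl b) ∨ (x = Sum.inl b ∧ y = Sum.inl a) ∨
       (x = Sum.inr a ∧ y = Sum.inr b) ∨ (x = Sum.inr b ∧ y = Sum.inr a)))) ∧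
  (∀ x, blockSize h x = 4 → ∃ a b : Fin (k + l), (a : ℕ) < k ∧ k ≤ (b : ℕ) ∧
    ∀ y, h.r x y ↔ (y = Sum.inl a ∨ y = Sum.inr a ∨ y = Sum.inl b ∨ y = Sum.inr b))

/-- The partition `l ∗_h r = (l_u* ⊗ r_u*) h (l_u ⊗ r_u)` mixing the through-block
structures of two projective partitions along `h`. -/
def mixP {a b ta tb : ℕ} (lu : PP a ta) (ru : PP b tb) (h : PP (ta + tb) (ta + tb)) :
    PP (a + b) (a + b) :=
  compP (tensorP (swapP lu) (swapP ru)) (compP h (tensorP lu ru))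

/-! ### General facts on setoids -/

theorem gen_le {α : Type*} {s t : Setoid α} {D : α → α → Prop} (h1 : ∀ u v, s.r u v → t.r u v)
    (h2 : ∀ u v, D u v → t.r u v) : ∀ u v, (s ⊔ Relation.EqvGen.setoid D).r u v → t.r u v := by
  have : s ⊔ Relation.EqvGen.setoid D ≤ t :=
    sup_le (fun {u v} h => h1 u v h) (Setoid.eqvGen_le h2)
  exact fun u v h => this h

theorem gen_left {α : Type*} {s : Setoid α} {D : α → α → Prop} {u v : α} (h : s.r u v) :
    (s ⊔ Relation.EqvGen.setoid D).r u v := by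
  have : s ≤ s ⊔ Relation.EqvGen.setoid D := le_sup_left
  exact this h

theorem gen_right {α : Type*} {s : Setoid α} {D : α → α → Prop} {u v : α} (h : D u v) :
    (s ⊔ Relation.EqvGen.setoid D).r u v := by
  have : Relation.EqvGen.setoid D ≤ s ⊔ Relation.EqvGen.setoid D := le_sup_right
  exact this (Relation.EqvGen.rel _ _ h)

theorem setoid_ext {α : Type*} {s t : Setoid α} (h : ∀ u v, s.r u v ↔ t.r u v) : s = t :=
  Setoid.ext h

theorem comap_gen {α β : Type*} (e : α → β) (S : Setoid β) (D : α → α → Prop) (x y : α) :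
    (Setoid.comap e S ⊔ Relation.EqvGen.setoid D).r x y ↔
    (S ⊔ Relation.EqvGen.setoid (fun u v => ∃ a b, D a b ∧ u = e a ∧ v = e b)).r (e x) (e y) := by
  constructor
  · refine gen_le (t := Setoid.comap e (S ⊔ Relation.EqvGen.setoid
      (fun u v => ∃ a b, D a b ∧ u = e a ∧ v = e b))) ?_ ?_ x y
    · intro u v h; exact gen_left h
    · intro u v h; exact gen_right ⟨u, v, h, rfl, rfl⟩
  · set Q := (Setoid.comap e S ⊔ Relation.EqvGen.setoid D) with hQ
    let t : Setoid β :=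
      { r := fun u v => S.r u v ∨ ∃ a b, S.r u (e a) ∧ Q.r a b ∧ S.r (e b) v
        iseqv := by
          refine ⟨fun u => Or.inl (S.refl' u), fun {u v} h => ?_, fun {u v w} h1 h2 => ?_⟩
          · rcases h with h | ⟨a, b, h1, h2, h3⟩
            · exact Or.inl (S.symm' h)
            · exact Or.inr ⟨b, a, S.symm' h3, Q.symm' h2, S.symm' h1⟩
          · rcases h1 with h1 | ⟨a, b, h1, h1', h1''⟩
            · rcases h2 with h2 | ⟨c, d, h2, h2', h2''⟩
              · exact Or.inl (S.trans' h1 h2)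
              · exact Or.inr ⟨c, d, S.trans' h1 h2, h2', h2''⟩
            · rcases h2 with h2 | ⟨c, d, h2, h2', h2''⟩
              · exact Or.inr ⟨a, b, h1, h1', S.trans' h1'' h2⟩
              · refine Or.inr ⟨a, d, h1, Q.trans' h1' (Q.trans' ?_ h2'), h2''⟩
                exact gen_left (s := Setoid.comap e S) (S.trans' h1'' h2) }
    intro h
    have := gen_le (t := t) (fun u v h => Or.inl h) (fun u v h => by
      obtain ⟨a, b, h1, rfl, rfl⟩ := h
      exact Or.inr ⟨a, b, S.refl' _, gen_right h1, S.refl' _⟩) _ _ h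
    rcases this with h | ⟨a, b, h1, h2, h3⟩
    · exact gen_left (s := Setoid.comap e S) h
    · exact Q.trans' (gen_left (s := Setoid.comap e S) h1)
        (Q.trans' h2 (gen_left (s := Setoid.comap e S) h3))

/-! ### Composition -/

theorem bigS_le {k l m : ℕ} {p : PP k l} {q : PP l m} {t : Setoid (Fin k ⊕ (Fin l ⊕ Fin m))}
    (h1 : ∀ a b, p.r a b → t.r (Sum.map id Sum.inl a) (Sum.map id Sum.inl b))
    (h2 : ∀ a b, q.r a b → t.r (Sum.inr a) (Sum.inr b)) :
    ∀ u v, (bigS p q).r u v → t.r u v := by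
  have : bigS p q ≤ t := by
    refine Setoid.eqvGen_le ?_
    rintro x y (⟨a, b, h, rfl, rfl⟩ | ⟨a, b, h, rfl, rfl⟩)
    · exact h1 a b h
    · exact h2 a b h
  exact fun u v h => this h

theorem bigS_left {k l m : ℕ} {p : PP k l} {q : PP l m} {a b : Fin k ⊕ Fin l} (h : p.r a b) :
    (bigS p q).r (Sum.map id Sum.inl a) (Sum.map id Sum.inl b) :=
  Relation.EqvGen.rel _ _ (Or.inl ⟨a, b, h, rfl, rfl⟩)

theorem bigS_right {k l m : ℕ} {p : PP k l} {q : PP l m} {a b : Fin l ⊕ Fin m} (h : q.r a b) :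
    (bigS p q).r (Sum.inr a) (Sum.inr b) :=
  Relation.EqvGen.rel _ _ (Or.inr ⟨a, b, h, rfl, rfl⟩)

theorem swapP_r {k l : ℕ} (p : PP k l) (u v : Fin l ⊕ Fin k) :
    (swapP p).r u v ↔ p.r u.swap v.swap := Iff.rfl

theorem swap_comp {k l m : ℕ} (q : PP l m) (p : PP k l) (u v : Fin k ⊕ Fin m) :
    (compP q p).r u v → (compP (swapP p) (swapP q)).r u.swap v.swap := by
  intro h
  let f : Fin k ⊕ (Fin l ⊕ Fin m) → Fin m ⊕ (Fin l ⊕ Fin k) :=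
    Sum.elim (fun i => Sum.inr (Sum.inr i))
      (Sum.elim (fun i => Sum.inr (Sum.inl i)) (fun i => Sum.inl i))
  have key := bigS_le (p := p) (q := q) (t := Setoid.comap f (bigS (swapP q) (swapP p))) ?_ ?_ _ _ h
  · rcases u with u | u <;> rcases v with v | v <;> exact key
  · intro a b hab
    have : (swapP p).r a.swap b.swap := by
      rw [swapP_r, Sum.swap_swap, Sum.swap_swap]; exact hab
    have := bigS_right (p := swapP q) this
    rcases a with a | a <;> rcases b with b | b <;> exact this
  · intro a b hab
    have : (swapP q).r a.swap b.swap := by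
      rw [swapP_r, Sum.swap_swap, Sum.swap_swap]; exact hab
    have := bigS_left (q := swapP p) this
    rcases a with a | a <;> rcases b with b | b <;> exact this

theorem swapP_swapP {k l : ℕ} (p : PP k l) : swapP (swapP p) = p := by
  apply setoid_ext; intro u v
  rw [swapP_r, swapP_r, Sum.swap_swap, Sum.swap_swap]

theorem swap_comp_iff {k l m : ℕ} (q : PP l m) (p : PP k l) (u v : Fin k ⊕ Fin m) :
    (compP q p).r u v ↔ (compP (swapP p) (swapP q)).r u.swap v.swap := by
  refine ⟨swap_comp q p u v, fun h => ?_⟩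
  have := swap_comp _ _ _ _ h
  rwa [Sum.swap_swap, Sum.swap_swap, swapP_swapP, swapP_swapP] at this

/-- Lower points lie in distinct blocks. -/
def LowDist {A T : ℕ} (U : PP A T) : Prop := ∀ i j, U.r (Sum.inr i) (Sum.inr j) → i = j

/-- Attachment of points. -/
def att {A T m : ℕ} (U : PP A T) : Fin A ⊕ (Fin T ⊕ Fin m) → Fin T ⊕ Fin m → Prop
  | Sum.inl x, Sum.inl i => U.r (Sum.inl x) (Sum.inr i)
  | Sum.inl _, Sum.inr _ => False
  | Sum.inr w, v => w = v

theorem att_unique {A T m : ℕ} {U : PP A T} (hU : LowDist U) {u : Fin A ⊕ (Fin T ⊕ Fin m)}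
    {i j : Fin T ⊕ Fin m} (h1 : att U u i) (h2 : att U u j) : i = j := by
  rcases u with u | u
  · rcases i with i | i <;> rcases j with j | j
    · exact congrArg _ (hU _ _ (U.trans' (U.symm' h1) h2))
    · exact h2.elim
    · exact h1.elim
    · exact h1.elim
  · exact Eq.trans (Eq.symm h1) h2

theorem att_sat {A T m : ℕ} {U : PP A T} {x y : Fin A} {i : Fin T ⊕ Fin m}
    (h1 : att U (Sum.inl x) i) (h2 : U.r (Sum.inl x) (Sum.inl y)) : att U (Sum.inl y) i := by
  rcases i with i | i
  · exact U.trans' (U.symm' h2) h1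
  · exact h1

/-- The relation generated in a composition with a partition with distinct lower points. -/
def compSet {A T m : ℕ} (U : PP A T) (hU : LowDist U) (V : PP T m) :
    Setoid (Fin A ⊕ (Fin T ⊕ Fin m)) where
  r u v := (∃ i j, att U u i ∧ att U v j ∧ V.r i j) ∨
    (∃ x y, u = Sum.inl x ∧ v = Sum.inl y ∧ U.r (Sum.inl x) (Sum.inl y))
  iseqv := by
    refine ⟨fun u => ?_, fun {u v} h => ?_, fun {u v w} h1 h2 => ?_⟩
    · rcases u with u | u
      · exact Or.inr ⟨u, u, rfl, rfl, U.refl' _⟩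
      · exact Or.inl ⟨u, u, rfl, rfl, V.refl' _⟩
    · rcases h with ⟨i, j, h1, h2, h3⟩ | ⟨x, y, h1, h2, h3⟩
      · exact Or.inl ⟨j, i, h2, h1, V.symm' h3⟩
      · exact Or.inr ⟨y, x, h2, h1, U.symm' h3⟩
    · rcases h1 with ⟨i, j, h1, h1', h1''⟩ | ⟨x, y, rfl, rfl, h1⟩
      · rcases h2 with ⟨i', j', h2, h2', h2''⟩ | ⟨x', y', rfl, rfl, h2⟩
        · obtain rfl := att_unique hU h1' h2
          exact Or.inl ⟨i, j', h1, h2', V.trans' h1'' h2''⟩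
        · exact Or.inl ⟨i, j, h1, att_sat h1' h2, h1''⟩
      · rcases h2 with ⟨i', j', h2, h2', h2''⟩ | ⟨x', y', h3, rfl, h2⟩
        · exact Or.inl ⟨i', j', att_sat h2 (U.symm' h1), h2', h2''⟩
        · obtain rfl := Sum.inl.inj h3
          exact Or.inr ⟨x, y', rfl, rfl, U.trans' h1 h2⟩

theorem att_bigS {A T m : ℕ} {U : PP A T} {V : PP T m} {u : Fin A ⊕ (Fin T ⊕ Fin m)}
    {i : Fin T ⊕ Fin m} (h : att U u i) : (bigS U V).r u (Sum.inr i) := by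
  rcases u with u | u
  · rcases i with i | i
    · exact bigS_left (a := Sum.inl u) (b := Sum.inr i) h
    · exact h.elim
  · obtain rfl : u = i := h
    exact (bigS U V).refl' _

theorem bigS_iff {A T m : ℕ} (U : PP A T) (hU : LowDist U) (V : PP T m)
    (u v : Fin A ⊕ (Fin T ⊕ Fin m)) : (bigS U V).r u v ↔ (compSet U hU V).r u v := by
  constructor
  · refine bigS_le ?_ ?_ u v
    · intro a b hab
      rcases a with a | a <;> rcases b with b | b
      · exact Or.inr ⟨a, b, rfl, rfl, hab⟩
      · exact Or.inl ⟨Sum.inl b, Sum.inl b, hab, rfl, V.refl' _⟩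
      · exact Or.inl ⟨Sum.inl a, Sum.inl a, rfl, U.symm' hab, V.refl' _⟩
      · obtain rfl := hU _ _ hab
        exact (compSet U hU V).refl' _
    · intro a b hab
      exact Or.inl ⟨a, b, rfl, rfl, hab⟩
  · rintro (⟨i, j, h1, h2, h3⟩ | ⟨x, y, rfl, rfl, h1⟩)
    · exact (bigS U V).trans' (att_bigS h1)
        ((bigS U V).trans' (bigS_right h3) ((bigS U V).symm' (att_bigS h2)))
    · exact bigS_left (a := Sum.inl x) (b := Sum.inl y) h1

theorem comp_ll {A T m : ℕ} {U : PP A T} (hU : LowDist U) (V : PP T m) (x y : Fin A) :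
    (compP V U).r (Sum.inl x) (Sum.inl y) ↔ U.r (Sum.inl x) (Sum.inl y) ∨
      ∃ i j, U.r (Sum.inl x) (Sum.inr i) ∧ U.r (Sum.inl y) (Sum.inr j) ∧
        V.r (Sum.inl i) (Sum.inl j) := by
  refine (bigS_iff U hU V (Sum.inl x) (Sum.inl y)).trans ⟨?_, ?_⟩
  · rintro (⟨i | i, j | j, h1, h2, h3⟩ | ⟨x, y, h1, h2, h3⟩)
    · exact Or.inr ⟨i, j, h1, h2, h3⟩
    · exact h2.elim
    · exact h1.elim
    · exact h1.elim
    · cases h1; cases h2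
      exact Or.inl h3
  · rintro (h | ⟨i, j, h1, h2, h3⟩)
    · exact Or.inr ⟨x, y, rfl, rfl, h⟩
    · exact Or.inl ⟨Sum.inl i, Sum.inl j, h1, h2, h3⟩

theorem comp_lr {A T m : ℕ} {U : PP A T} (hU : LowDist U) (V : PP T m) (x : Fin A) (y : Fin m) :
    (compP V U).r (Sum.inl x) (Sum.inr y) ↔
      ∃ i, U.r (Sum.inl x) (Sum.inr i) ∧ V.r (Sum.inl i) (Sum.inr y) := by
  refine (bigS_iff U hU V (Sum.inl x) (Sum.inr (Sum.inr y))).trans ⟨?_, ?_⟩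
  · rintro (⟨i | i, j, h1, h2, h3⟩ | ⟨x, y, h1, h2, h3⟩)
    · cases h2
      exact ⟨i, h1, h3⟩
    · exact h1.elim
    · cases h2
  · rintro ⟨i, h1, h2⟩
    exact Or.inl ⟨Sum.inl i, Sum.inr y, h1, rfl, h2⟩

theorem comp_rr {A T m : ℕ} {U : PP A T} (hU : LowDist U) (V : PP T m) (x y : Fin m) :
    (compP V U).r (Sum.inr x) (Sum.inr y) ↔ V.r (Sum.inr x) (Sum.inr y) := by
  refine (bigS_iff U hU V (Sum.inr (Sum.inr x)) (Sum.inr (Sum.inr y))).trans ⟨?_, ?_⟩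
  · rintro (⟨i, j, h1, h2, h3⟩ | ⟨x, y, h1, h2, h3⟩)
    · cases h1; cases h2
      exact h3
    · cases h1
  · intro h
    exact Or.inl ⟨_, _, rfl, rfl, h⟩

/-! ### The generic form of the mixed partition -/

/-- Row-wise attachment. -/
def att2 {A T : ℕ} (U : PP A T) : Fin A ⊕ Fin A → Fin T ⊕ Fin T → Prop :=
  Sum.LiftRel (fun x i => U.r (Sum.inl x) (Sum.inr i)) (fun x i => U.r (Sum.inl x) (Sum.inr i))

/-- Row-wise relation. -/
def row2 {A T : ℕ} (U : PP A T) : Fin A ⊕ Fin A → Fin A ⊕ Fin A → Prop :=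
  Sum.LiftRel (fun x i => U.r (Sum.inl x) (Sum.inl i)) (fun x i => U.r (Sum.inl x) (Sum.inl i))

theorem mix_iff {A T : ℕ} {U : PP A T} (hU : LowDist U) (h : PP T T) (u v : Fin A ⊕ Fin A) :
    (compP (swapP U) (compP h U)).r u v ↔
      row2 U u v ∨ ∃ i j, att2 U u i ∧ att2 U v j ∧ h.r i j := by
  rw [swap_comp_iff, swapP_swapP]
  rcases u with x | x <;> rcases v with y | y
  · rw [show (Sum.inl x : Fin A ⊕ Fin A).swap = Sum.inr x from rfl,
      show (Sum.inl y : Fin A ⊕ Fin A).swap = Sum.inr y from rfl, comp_rr hU]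
    rw [show (swapP (compP h U)).r (Sum.inr x) (Sum.inr y) ↔
      (compP h U).r (Sum.inl x) (Sum.inl y) from Iff.rfl, comp_ll hU]
    simp [row2, att2]
  · rw [show (Sum.inl x : Fin A ⊕ Fin A).swap = Sum.inr x from rfl,
      show (Sum.inr y : Fin A ⊕ Fin A).swap = Sum.inl y from rfl]
    rw [Setoid.comm' , comp_lr hU]
    have : ∀ i, (swapP (compP h U)).r (Sum.inl i) (Sum.inr x) ↔
      ∃ j, U.r (Sum.inl x) (Sum.inr j) ∧ h.r (Sum.inl j) (Sum.inr i) := by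
      intro i
      rw [← comp_lr hU, Setoid.comm']; rfl
    simp only [this]
    simp [row2, att2]
    grind
  · rw [show (Sum.inr x : Fin A ⊕ Fin A).swap = Sum.inl x from rfl,
      show (Sum.inl y : Fin A ⊕ Fin A).swap = Sum.inr y from rfl]
    rw [comp_lr hU]
    have : ∀ i, (swapP (compP h U)).r (Sum.inl i) (Sum.inr y) ↔
      ∃ j, U.r (Sum.inl y) (Sum.inr j) ∧ h.r (Sum.inr i) (Sum.inl j) := by
      intro i
      simp only [Setoid.comm' (s := h) (x := Sum.inr i)]
      rw [← comp_lr hU, Setoid.comm']; rfl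
    simp only [this]
    simp [row2, att2]
  · rw [show (Sum.inr x : Fin A ⊕ Fin A).swap = Sum.inl x from rfl,
      show (Sum.inr y : Fin A ⊕ Fin A).swap = Sum.inl y from rfl, comp_ll hU]
    have : ∀ i j, (swapP (compP h U)).r (Sum.inl i) (Sum.inl j) ↔ h.r (Sum.inr i) (Sum.inr j) :=
      fun i j => comp_rr hU h i j
    simp [row2, att2, this]

/-- The description of `u* u`. -/
theorem proj_iff {A T : ℕ} {U : PP A T} (hU : LowDist U) (u v : Fin A ⊕ Fin A) :
    (compP (swapP U) U).r u v ↔ row2 U u v ∨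
      ∃ i, U.r (Sum.inl (Sum.elim id id u)) (Sum.inr i) ∧
        U.r (Sum.inl (Sum.elim id id v)) (Sum.inr i) := by
  rcases u with x | x <;> rcases v with y | y
  · rw [comp_ll hU]
    simp only [row2, Sum.liftRel_inl_inl, Sum.elim_inl, id]
    apply or_congr Iff.rfl
    constructor
    · rintro ⟨i, j, h1, h2, h3⟩
      obtain rfl := hU _ _ h3
      exact ⟨i, h1, h2⟩
    · rintro ⟨i, h1, h2⟩
      exact ⟨i, i, h1, h2, (swapP U).refl' _⟩
  · rw [comp_lr hU]
    simp only [row2, Sum.not_liftRel_inl_inr, false_or, Sum.elim_inl, Sum.elim_inr, id]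
    exact exists_congr fun i => and_congr Iff.rfl (Setoid.comm' U)
  · rw [Setoid.comm', comp_lr hU]
    simp only [row2, Sum.not_liftRel_inr_inl, false_or, Sum.elim_inl, Sum.elim_inr, id]
    exact exists_congr fun i => (and_congr Iff.rfl (Setoid.comm' U)).trans and_comm
  · rw [comp_rr hU]
    simp only [row2, Sum.liftRel_inr_inr, Sum.elim_inr, id]
    constructor
    · exact Or.inl
    · rintro (h | ⟨i, h1, h2⟩)
      · exact h
      · exact U.trans' h1 (U.symm' h2)

/-! ### Traces inside a category of partitions -/

theorem tensor_ll {k l k' l' : ℕ} (p : PP k l) (q : PP k' l') (u v : Fin (k + k') ⊕ Fin (l + l')) :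
    (tensorP p q).r u v ↔
      Sum.LiftRel p.r q.r (tensorEquiv k l k' l' u) (tensorEquiv k l k' l' v) := Iff.rfl

theorem te1 {k l k' l' : ℕ} (i : Fin k) :
    tensorEquiv k l k' l' (Sum.inl (Fin.castAdd k' i)) = Sum.inl (Sum.inl i) := by
  simp [tensorEquiv]

theorem te2 {k l k' l' : ℕ} (i : Fin k') :
    tensorEquiv k l k' l' (Sum.inl (Fin.natAdd k i)) = Sum.inr (Sum.inl i) := by
  simp [tensorEquiv]

theorem te3 {k l k' l' : ℕ} (i : Fin l) :
    tensorEquiv k l k' l' (Sum.inr (Fin.castAdd l' i)) = Sum.inl (Sum.inr i) := by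
  simp [tensorEquiv]

theorem te4 {k l k' l' : ℕ} (i : Fin l') :
    tensorEquiv k l k' l' (Sum.inr (Fin.natAdd l i)) = Sum.inr (Sum.inr i) := by
  simp [tensorEquiv]

theorem fin_add_cases {m n : ℕ} (x : Fin (m + n)) :
    (∃ i : Fin m, x = Fin.castAdd n i) ∨ (∃ i : Fin n, x = Fin.natAdd m i) := by
  induction x using Fin.addCases with
  | left i => exact Or.inl ⟨i, rfl⟩
  | right i => exact Or.inr ⟨i, rfl⟩

theorem idP_r {k : ℕ} (u v : Fin k ⊕ Fin k) :
    (idP k).r u v ↔ Sum.elim id id u = Sum.elim id id v := Iff.rfl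

theorem idP_tensor (k : ℕ) : tensorP (idP k) (idP 1) = idP (k + 1) := by
  apply setoid_ext
  intro u v
  rw [tensor_ll, idP_r]
  rcases u with x | x <;> rcases v with y | y <;>
  obtain ⟨i, rfl⟩ | ⟨i, rfl⟩ := fin_add_cases x <;>
  obtain ⟨j, rfl⟩ | ⟨j, rfl⟩ := fin_add_cases y <;>
  simp only [te1, te2, te3, te4, Sum.liftRel_inl_inl, Sum.liftRel_inr_inr,
    Sum.not_liftRel_inl_inr, Sum.not_liftRel_inr_inl, idP_r, Sum.elim_inl, Sum.elim_inr, id,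
    Fin.ext_iff, Fin.val_castAdd, Fin.val_natAdd, false_iff] <;> omega

theorem idP_mem (C : PartitionCategory) (k : ℕ) : idP k ∈ C.mem k k := by
  induction k with
  | zero =>
    have h1 := C.rotR_mem (k := 0) (l := 1) _ C.id_mem
    have h2 := C.comp_mem _ _ (C.swap_mem _ h1) h1
    convert h2
    apply setoid_ext
    intro u
    rcases u with u | u <;> exact u.elim0
  | succ k ih =>
    rw [← idP_tensor]
    exact C.tensor_mem _ _ ih C.id_mem

/-- Abstract description of left and right rotations. -/
structure RotData (C : PartitionCategory) where
  e : ∀ m, Fin m → Fin (m + 1)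
  z : ∀ m, Fin (m + 1)
  rot : ∀ k l, (Fin k ⊕ Fin (l + 1)) ≃ (Fin (k + 1) ⊕ Fin l)
  cov : ∀ m x, x = z m ∨ ∃ y, x = e m y
  ne : ∀ m y, e m y ≠ z m
  inj : ∀ m, Function.Injective (e m)
  rot1 : ∀ k l i, rot k l (Sum.inl i) = Sum.inl (e k i)
  rot2 : ∀ k l, rot k l (Sum.inr (z l)) = Sum.inl (z k)
  rot3 : ∀ k l j, rot k l (Sum.inr (e l j)) = Sum.inr j
  mem1 : ∀ {k l : ℕ} (p : PP (k + 1) l),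
    p ∈ C.mem (k + 1) l → Setoid.comap (rot k l) p ∈ C.mem k (l + 1)
  mem2 : ∀ {k l : ℕ} (p : PP k (l + 1)),
    p ∈ C.mem k (l + 1) → Setoid.comap (rot k l).symm p ∈ C.mem (k + 1) l

/-- Right rotations. -/
def rotR (C : PartitionCategory) : RotData C where
  e m := Fin.castSucc
  z m := Fin.last m
  rot := rotEquivR
  cov m x := by
    induction x using Fin.lastCases with
    | last => exact Or.inl rfl
    | cast i => exact Or.inr ⟨i, rfl⟩
  ne m y := Fin.castSucc_ne_last y
  inj m := Fin.castSucc_injective m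
  rot1 k l i := by simp [rotEquivR]; rfl
  rot2 k l := by
    have : Fin.last l = Fin.natAdd l (0 : Fin 1) := rfl
    simp [rotEquivR, this]; rfl
  rot3 k l j := by
    have : Fin.castSucc j = Fin.castAdd 1 j := rfl
    rw [this]
    simp [rotEquivR]
  mem1 := C.rotR_mem
  mem2 p hp := C.rotR_mem' p hp

/-- Left rotations. -/
def rotL (C : PartitionCategory) : RotData C where
  e m := Fin.succ
  z m := 0
  rot := rotEquivL
  cov m x := by
    induction x using Fin.cases with
    | zero => exact Or.inl rfl
    | succ i => exact Or.inr ⟨i, rfl⟩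
  ne m y := Fin.succ_ne_zero y
  inj m := Fin.succ_injective m
  rot1 k l i := by
    simp [rotEquivL, Nat.add_comm]
  rot2 k l := by
    have : (finCongr (Nat.add_comm l 1)) 0 = Fin.castAdd l (0 : Fin 1) := by
      simp [Fin.ext_iff]
    simp only [rotEquivL, Equiv.trans_apply, Equiv.sumCongr_apply, Sum.map_inr, this]
    simp [Fin.ext_iff]
  rot3 k l j := by
    have : (finCongr (Nat.add_comm l 1)) j.succ = Fin.natAdd 1 j := by
      simp [Fin.ext_iff, Nat.add_comm]
    simp only [rotEquivL, Equiv.trans_apply, Equiv.sumCongr_apply, Sum.map_inr, this]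
    simp
  mem1 := C.rotL_mem
  mem2 p hp := C.rotL_mem' p hp

theorem trace_one {C : PartitionCategory} (R : RotData C) {k : ℕ} (p : PP (k + 1) (k + 1))
    (hp : p ∈ C.mem (k + 1) (k + 1)) :
    Setoid.comap (Sum.map (R.e k) (R.e k)) (p ⊔ Relation.EqvGen.setoid
      (fun u v => u = Sum.inl (R.z k) ∧ v = Sum.inr (R.z k))) ∈ C.mem k k := by
  set D := (fun u v : Fin (k + 1) ⊕ Fin (k + 1) => u = Sum.inl (R.z k) ∧ v = Sum.inr (R.z k))
    with hD
  set S := p ⊔ Relation.EqvGen.setoid D with hS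
  have hq := R.mem1 _ hp
  have hd := R.mem2 _ (idP_mem C (k + 1))
  have hc := C.comp_mem _ _ hd hq
  set q := Setoid.comap (R.rot k (k + 1)) p with hqdef
  set d := Setoid.comap (R.rot (k + 1) k).symm (idP (k + 1)) with hddef
  have s1 : ∀ i, (R.rot (k + 1) k).symm (Sum.inl (R.e _ i)) = Sum.inl i := fun i => by
    rw [Equiv.symm_apply_eq, R.rot1]
  have s2 : (R.rot (k + 1) k).symm (Sum.inl (R.z _)) = Sum.inr (R.z _) := by
    rw [Equiv.symm_apply_eq, R.rot2]
  have s3 : ∀ i, (R.rot (k + 1) k).symm (Sum.inr i) = Sum.inr (R.e _ i) := fun i => by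
    rw [Equiv.symm_apply_eq, R.rot3]
  have t1 : ∀ i, (R.rot k (k + 1)).symm (Sum.inl (R.e _ i)) = Sum.inl i := fun i => by
    rw [Equiv.symm_apply_eq, R.rot1]
  have t2 : (R.rot k (k + 1)).symm (Sum.inl (R.z _)) = Sum.inr (R.z _) := by
    rw [Equiv.symm_apply_eq, R.rot2]
  have t3 : ∀ i, (R.rot k (k + 1)).symm (Sum.inr i) = Sum.inr (R.e _ i) := fun i => by
    rw [Equiv.symm_apply_eq, R.rot3]
  have dr : ∀ u v, d.r u v ↔ Sum.elim id id ((R.rot (k + 1) k).symm u) =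
    Sum.elim id id ((R.rot (k + 1) k).symm v) := fun u v => Iff.rfl
  convert hc using 1
  apply setoid_ext
  intro u v
  constructor
  · intro h
    let ψ : Fin (k + 1) ⊕ Fin (k + 1) → Fin k ⊕ (Fin (k + 1 + 1) ⊕ Fin k) :=
      fun u => Sum.map id Sum.inl ((R.rot k (k + 1)).symm u)
    have key : ∀ u v, S.r u v → (Setoid.comap ψ (bigS q d)).r u v := by
      refine gen_le ?_ ?_
      · intro u v h
        refine bigS_left (p := q) (q := d) ?_
        change p.r _ _
        rwa [Equiv.apply_symm_apply, Equiv.apply_symm_apply]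
      · rintro u v ⟨rfl, rfl⟩
        change (bigS q d).r (ψ _) (ψ _)
        simp only [ψ, t2, t3, Sum.map_inr]
        refine bigS_right ?_
        rw [dr, s2, s1]; rfl
    have hψ : ∀ u, (bigS q d).r (ψ (Sum.map (R.e k) (R.e k) u)) (Sum.map id Sum.inr u) := by
      rintro (u | u)
      · simp only [ψ, Sum.map_inl, t1]
        exact (bigS q d).refl' _
      · simp only [ψ, Sum.map_inr, t3]
        refine bigS_right ?_
        rw [dr, s1, s3]; rfl
    exact (bigS q d).trans' ((bigS q d).symm' (hψ u)) ((bigS q d).trans' (key _ _ h) (hψ v))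
  · intro h
    let φ : Fin k ⊕ (Fin (k + 1 + 1) ⊕ Fin k) → Fin (k + 1) ⊕ Fin (k + 1) :=
      Sum.elim (fun i => Sum.inl (R.e k i)) (Sum.elim (fun j => R.rot k (k + 1) (Sum.inr j))
        (fun j => Sum.inr (R.e k j)))
    have hφ : ∀ a, S.r (φ (Sum.inr a)) (Sum.inr (Sum.elim id id ((R.rot (k + 1) k).symm a))) := by
      rintro (a | a)
      · obtain rfl | ⟨i, rfl⟩ := R.cov _ a
        · rw [s2]
          simp only [φ, Sum.elim_inr, Sum.elim_inl, R.rot2]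
          exact gen_right ⟨rfl, rfl⟩
        · rw [s1]
          simp only [φ, Sum.elim_inr, Sum.elim_inl, R.rot3]
          exact S.refl' _
      · rw [s3]
        exact S.refl' _
    have key := bigS_le (p := q) (q := d) (t := Setoid.comap φ S) ?_ ?_ _ _ h
    · rcases u with u | u <;> rcases v with v | v <;> exact key
    · intro a b hab
      have hφ' : ∀ a, φ (Sum.map id Sum.inl a) = R.rot k (k + 1) a := by
        rintro (a | a)
        · exact (R.rot1 _ _ _).symm
        · rfl
      change S.r (φ _) (φ _)
      rw [hφ', hφ']
      exact gen_left hab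
    · intro a b hab
      rw [dr] at hab
      change S.r (φ _) (φ _)
      have h1 := hφ a
      rw [hab] at h1
      exact S.trans' h1 (S.symm' (hφ b))

/-- Iterated embedding. -/
def RotData.eN {C : PartitionCategory} (R : RotData C) (k : ℕ) : ∀ n, Fin k → Fin (k + n)
  | 0, i => i
  | n + 1, i => R.e (k + n) (R.eN k n i)

theorem trace_many {C : PartitionCategory} (R : RotData C) {k : ℕ} (n : ℕ) (p : PP (k + n) (k + n))
    (hp : p ∈ C.mem (k + n) (k + n)) :
    Setoid.comap (Sum.map (R.eN k n) (R.eN k n)) (p ⊔ Relation.EqvGen.setoid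
      (fun u v => ∃ x, x ∉ Set.range (R.eN k n) ∧ u = Sum.inl x ∧ v = Sum.inr x)) ∈ C.mem k k := by
  induction n with
  | zero =>
    refine (congrArg (fun s => s ∈ C.mem k k) (?_ : _ = p)).mpr hp
    apply setoid_ext
    intro u v
    have : ∀ u : Fin k ⊕ Fin k, Sum.map (R.eN k 0) (R.eN k 0) u = u := by
      rintro (u | u) <;> rfl
    change (_ ⊔ _ : Setoid _).r (Sum.map (R.eN k 0) (R.eN k 0) u)
      (Sum.map (R.eN k 0) (R.eN k 0) v) ↔ _
    rw [this, this]
    refine ⟨gen_le (fun _ _ h => h) ?_ u v, gen_left⟩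
    rintro u v ⟨x, hx, -⟩
    exact (hx ⟨x, rfl⟩).elim
  | succ n ih =>
    have h1 := ih _ (trace_one R (k := k + n) p hp)
    convert h1 using 1
    apply setoid_ext
    intro u v
    change _ ↔ (_ ⊔ _ : Setoid _).r (Sum.map (R.eN k n) (R.eN k n) u)
      (Sum.map (R.eN k n) (R.eN k n) v)
    rw [comap_gen]
    have hm : ∀ u : Fin k ⊕ Fin k, Sum.map (R.e (k + n)) (R.e (k + n))
      (Sum.map (R.eN k n) (R.eN k n) u) = Sum.map (R.eN k (n + 1)) (R.eN k (n + 1)) u := by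
      rintro (u | u) <;> rfl
    rw [hm, hm]
    constructor
    · refine gen_le (fun u v h => gen_left (gen_left h)) ?_ _ _
      rintro u v ⟨x, hx, rfl, rfl⟩
      obtain rfl | ⟨y, rfl⟩ := R.cov _ x
      · exact gen_left (gen_right ⟨rfl, rfl⟩)
      · refine gen_right ⟨Sum.inl y, Sum.inr y, ⟨y, ?_, rfl, rfl⟩, rfl, rfl⟩
        rintro ⟨w, rfl⟩
        exact hx ⟨w, rfl⟩
    · refine gen_le (gen_le (fun u v h => gen_left h) ?_) ?_ _ _
      · rintro u v ⟨rfl, rfl⟩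
        refine gen_right ⟨_, ?_, rfl, rfl⟩
        rintro ⟨w, hw⟩
        exact R.ne _ _ hw
      · rintro u v ⟨_, _, ⟨x, hx, rfl, rfl⟩, rfl, rfl⟩
        refine gen_right ⟨R.e _ x, ?_, rfl, rfl⟩
        rintro ⟨w, hw⟩
        exact hx ⟨w, R.inj _ hw⟩

theorem eN_R (C : PartitionCategory) (k n : ℕ) (i : Fin k) :
    (rotR C).eN k n i = Fin.castAdd n i := by
  induction n with
  | zero => rfl
  | succ n ih =>
    change Fin.castSucc ((rotR C).eN k n i) = _
    rw [ih]; rfl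

theorem eN_L (C : PartitionCategory) (k n : ℕ) (i : Fin k) :
    (rotL C).eN k n i = Fin.addNat i n := by
  induction n with
  | zero => rfl
  | succ n ih =>
    change Fin.succ ((rotL C).eN k n i) = _
    rw [ih]; rfl

theorem mem_cast (C : PartitionCategory) {k k' : ℕ} (h : k' = k) (p : PP k k)
    (hp : p ∈ C.mem k k) :
    Setoid.comap (Sum.map (Fin.cast h) (Fin.cast h)) p ∈ C.mem k' k' := by
  subst h
  convert hp using 1
  apply setoid_ext
  intro u v
  rcases u with u | u <;> rcases v with v | v <;> rfl

/-! ### The partial trace of the mixed partition -/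

/-- Forget the row. -/
abbrev base {A : ℕ} (u : Fin A ⊕ Fin A) : Fin A := Sum.elim id id u

/-- Properties of a mixing partition relative to a colouring of its points. -/
structure MixData {T : ℕ} (h : PP T T) (c : Fin T → Prop) : Prop where
  sym : ∀ s t, h.r s t → h.r s.swap t.swap
  same : ∀ s t, h.r s t → (c (base s) ↔ c (base t)) → base s = base t
  thr : ∀ i, h.r (Sum.inl i) (Sum.inr i) ∨ ∃ j, ¬ (c j ↔ c i) ∧ h.r (Sum.inl i) (Sum.inl j)

theorem MixData.neg {T : ℕ} {h : PP T T} {c : Fin T → Prop} (H : MixData h c) :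
    MixData h (fun i => ¬ c i) where
  sym := H.sym
  same s t h1 h2 := H.same s t h1 (not_iff_not.mp h2)
  thr i := by
    rcases H.thr i with h | ⟨j, h1, h2⟩
    · exact Or.inl h
    · exact Or.inr ⟨j, fun h3 => h1 (not_iff_not.mp h3), h2⟩

theorem base_swap {A : ℕ} (u : Fin A ⊕ Fin A) : base u.swap = base u := by
  rcases u with u | u <;> rfl

theorem base_eq {A : ℕ} {u v : Fin A ⊕ Fin A} (h : base u = base v) : u = v ∨ u = v.swap := by
  rcases u with u | u <;> rcases v with v | v
  · exact Or.inl (congrArg _ h)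
  · exact Or.inr (congrArg _ h)
  · exact Or.inr (congrArg _ h)
  · exact Or.inl (congrArg _ h)

/-- The collapsed relation. -/
def collapse {T : ℕ} (h : PP T T) (hs : ∀ s t, h.r s t → h.r s.swap t.swap) : Setoid (Fin T) where
  r i j := ∃ s t, h.r s t ∧ base s = i ∧ base t = j
  iseqv := by
    refine ⟨fun i => ⟨Sum.inl i, Sum.inl i, h.refl' _, rfl, rfl⟩, ?_, ?_⟩
    · rintro i j ⟨s, t, h1, h2, h3⟩
      exact ⟨t, s, h.symm' h1, h3, h2⟩
    · rintro i j k ⟨s, t, h1, rfl, rfl⟩ ⟨s', t', h2, h3, rfl⟩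
      rcases base_eq h3 with rfl | rfl
      · exact ⟨s, t', h.trans' h1 h2, rfl, rfl⟩
      · refine ⟨s, t'.swap, h.trans' h1 ?_, rfl, base_swap _⟩
        have := hs _ _ h2
        rwa [Sum.swap_swap] at this

theorem row2_base {A T : ℕ} {U : PP A T} {u v : Fin A ⊕ Fin A} (h : row2 U u v) :
    U.r (Sum.inl (base u)) (Sum.inl (base v)) := by
  rcases h with h | h <;> assumption

theorem att2_base {A T : ℕ} {U : PP A T} {u : Fin A ⊕ Fin A} {i : Fin T ⊕ Fin T}
    (h : att2 U u i) : U.r (Sum.inl (base u)) (Sum.inr (base i)) := by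
  rcases h with h | h <;> assumption

theorem row2_refl {A T : ℕ} (U : PP A T) (u : Fin A ⊕ Fin A) : row2 U u u := by
  rcases u with u | u
  · exact Sum.LiftRel.inl (U.refl' _)
  · exact Sum.LiftRel.inr (U.refl' _)

theorem row2_symm {A T : ℕ} {U : PP A T} {u v : Fin A ⊕ Fin A} (h : row2 U u v) : row2 U v u := by
  rcases h with h | h
  · exact Sum.LiftRel.inl (U.symm' h)
  · exact Sum.LiftRel.inr (U.symm' h)

theorem row2_trans {A T : ℕ} {U : PP A T} {u v w : Fin A ⊕ Fin A} (h : row2 U u v)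
    (h2 : row2 U v w) : row2 U u w := by
  rcases h with h | h <;> rcases h2 with h2 | h2
  · exact Sum.LiftRel.inl (U.trans' h h2)
  · exact Sum.LiftRel.inr (U.trans' h h2)

/-- The relation generated by the mixed partition and the closing strings. -/
def traceSet {A T : ℕ} (U : PP A T) (hU : LowDist U) (c : Fin A → Prop)
    (hc : ∀ x y, U.r (Sum.inl x) (Sum.inl y) → (c x ↔ c y)) (K : Setoid (Fin T)) :
    Setoid (Fin A ⊕ Fin A) where
  r u v := (∃ i j, U.r (Sum.inl (base u)) (Sum.inr i) ∧ U.r (Sum.inl (base v)) (Sum.inr j) ∧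
      K.r i j) ∨ row2 U u v ∨ (¬ c (base u) ∧ U.r (Sum.inl (base u)) (Sum.inl (base v)))
  iseqv := by
    refine ⟨fun u => Or.inr (Or.inl (row2_refl U u)), ?_, ?_⟩
    · rintro u v (⟨i, j, h1, h2, h3⟩ | h | ⟨h1, h2⟩)
      · exact Or.inl ⟨j, i, h2, h1, K.symm' h3⟩
      · exact Or.inr (Or.inl (row2_symm h))
      · exact Or.inr (Or.inr ⟨fun h => h1 ((hc _ _ h2).mpr h), U.symm' h2⟩)
    · have aux : ∀ u v, (row2 U u v ∨ (¬ c (base u) ∧ U.r (Sum.inl (base u)) (Sum.inl (base v)))) →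
          U.r (Sum.inl (base u)) (Sum.inl (base v)) := by
        rintro u v (h | h)
        · exact row2_base h
        · exact h.2
      rintro u v w (⟨i, j, h1, h2, h3⟩ | h) (⟨i', j', h1', h2', h3'⟩ | h')
      · obtain rfl := hU _ _ (U.trans' (U.symm' h2) h1')
        exact Or.inl ⟨i, j', h1, h2', K.trans' h3 h3'⟩
      · exact Or.inl ⟨i, j, h1, U.trans' (U.symm' (aux _ _ h')) h2, h3⟩
      · exact Or.inl ⟨i', j', U.trans' (aux _ _ h) h1', h2', h3'⟩
      · have g := aux _ _ h
        have g' := aux _ _ h'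
        rcases h with h | h
        · rcases h' with h' | h'
          · exact Or.inr (Or.inl (row2_trans h h'))
          · exact Or.inr (Or.inr ⟨fun h => h'.1 ((hc _ _ g).mp h), U.trans' g g'⟩)
        · exact Or.inr (Or.inr ⟨h.1, U.trans' g g'⟩)

theorem trace_mix {A T : ℕ} (U : PP A T) (hU : LowDist U)
    (hS : ∀ i, ∃ x, U.r (Sum.inl x) (Sum.inr i)) (c : Fin A → Prop) (cT : Fin T → Prop)
    (hc : ∀ x y, U.r (Sum.inl x) (Sum.inl y) → (c x ↔ c y))
    (hcT : ∀ x i, U.r (Sum.inl x) (Sum.inr i) → (c x ↔ cT i))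
    (h : PP T T) (H : MixData h cT) (u v : Fin A ⊕ Fin A) (hu : c (base u)) (hv : c (base v)) :
    ((compP (swapP U) (compP h U)) ⊔ Relation.EqvGen.setoid
      (fun u v => ∃ x, ¬ c x ∧ u = Sum.inl x ∧ v = Sum.inr x)).r u v ↔
    row2 U u v ∨ ∃ i, U.r (Sum.inl (base u)) (Sum.inr i) ∧ U.r (Sum.inl (base v)) (Sum.inr i) := by
  set M := compP (swapP U) (compP h U) with hM
  constructor
  · intro huv
    have key := gen_le (t := traceSet U hU c hc (collapse h H.sym)) ?_ ?_ _ _ huv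
    · rcases key with ⟨i, j, h1, h2, s, t, h3, rfl, rfl⟩ | h1 | h1
      · have e := H.same s t h3
          ⟨fun _ => (hcT _ _ h2).mp hv, fun _ => (hcT _ _ h1).mp hu⟩
        rw [← e] at h2
        exact Or.inr ⟨_, h1, h2⟩
      · exact Or.inl h1
      · exact (h1.1 hu).elim
    · intro u v h1
      rcases (mix_iff hU h u v).mp h1 with h1 | ⟨i, j, h1, h2, h3⟩
      · exact Or.inr (Or.inl h1)
      · exact Or.inl ⟨_, _, att2_base h1, att2_base h2, i, j, h3, rfl, rfl⟩
    · rintro u v ⟨x, hx, rfl, rfl⟩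
      exact Or.inr (Or.inr ⟨hx, U.refl' _⟩)
  · set G := M ⊔ Relation.EqvGen.setoid
      (fun u v => ∃ x, ¬ c x ∧ u = Sum.inl x ∧ v = Sum.inr x) with hG
    have mM : ∀ u v, (row2 U u v ∨ ∃ i j, att2 U u i ∧ att2 U v j ∧ h.r i j) → G.r u v :=
      fun u v h1 => gen_left ((mix_iff hU h u v).mpr h1)
    have through : ∀ x y i, c x → c y → U.r (Sum.inl x) (Sum.inr i) →
        U.r (Sum.inl y) (Sum.inr i) → G.r (Sum.inl x) (Sum.inr y) := by
      intro x y i hx hy h1 h2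
      rcases H.thr i with h3 | ⟨j, hj, h3⟩
      · exact mM _ _ (Or.inr ⟨_, _, Sum.LiftRel.inl h1, Sum.LiftRel.inr h2, h3⟩)
      · obtain ⟨w, hw⟩ := hS j
        have g1 : G.r (Sum.inl x) (Sum.inl w) :=
          mM _ _ (Or.inr ⟨_, _, Sum.LiftRel.inl h1, Sum.LiftRel.inl hw, h3⟩)
        have g3 : G.r (Sum.inr y) (Sum.inr w) :=
          mM _ _ (Or.inr ⟨_, _, Sum.LiftRel.inr h2, Sum.LiftRel.inr hw, H.sym _ _ h3⟩)
        have g2 : G.r (Sum.inl w) (Sum.inr w) := by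
          refine gen_right ⟨w, fun h4 => hj ?_, rfl, rfl⟩
          exact ⟨fun _ => (hcT _ _ h1).mp hx, fun _ => (hcT _ _ hw).mp h4⟩
        exact G.trans' g1 (G.trans' g2 (G.symm' g3))
    rintro (h1 | ⟨i, h1, h2⟩)
    · exact mM _ _ (Or.inl h1)
    · rcases u with x | x <;> rcases v with y | y
      · exact mM _ _ (Or.inl (Sum.LiftRel.inl (U.trans' h1 (U.symm' h2))))
      · exact through x y i hu hv h1 h2
      · exact G.symm' (through y x i hv hu h2 h1)
      · exact mM _ _ (Or.inl (Sum.LiftRel.inr (U.trans' h1 (U.symm' h2))))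

/-! ### Mixing partitions -/

theorem mixing_data {k l : ℕ} {h : PP (k + l) (k + l)} (hh : isMixing k l h) :
    MixData h (fun i => (i : ℕ) < k) := by
  obtain ⟨⟨hs, -⟩, h24, h2, h4⟩ := hh
  refine ⟨?_, ?_, ?_⟩
  · intro s t hst
    have : (swapP h).r s t := by rw [hs]; exact hst
    exact this
  · intro s t hst hc
    by_cases e : s = t
    · rw [e]
    rcases h24 s with h24 | h24
    · rcases h2 s t hst e h24 with ⟨x, ⟨rfl, rfl⟩ | ⟨rfl, rfl⟩⟩ | ⟨x, y, hx, hy, h3⟩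
      · rfl
      · rfl
      · rcases h3 with ⟨rfl, rfl⟩ | ⟨rfl, rfl⟩ | ⟨rfl, rfl⟩ | ⟨rfl, rfl⟩ <;>
          simp only [base, Sum.elim_inl, Sum.elim_inr, id] at hc <;> omega
    · obtain ⟨x, y, hx, hy, h3⟩ := h4 s h24
      have g1 := (h3 s).mp (h.refl' _)
      have g2 := (h3 t).mp hst
      rcases g1 with rfl | rfl | rfl | rfl <;> rcases g2 with rfl | rfl | rfl | rfl <;>
        first
        | rfl
        | (simp only [base, Sum.elim_inl, Sum.elim_inr, id] at hc; omega)
  · intro i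
    rcases h24 (Sum.inl i) with g | g
    · have : ∃ t, h.r (Sum.inl i) t ∧ Sum.inl i ≠ t := by
        by_contra! hcon
        have : Subsingleton {y // h.r (Sum.inl i) y} :=
          ⟨fun p q => Subtype.ext ((hcon _ p.2).symm.trans (hcon _ q.2))⟩
        have := Finite.card_le_one_iff_subsingleton.mpr this
        rw [blockSize] at g
        omega
      obtain ⟨t, ht, hne⟩ := this
      rcases h2 _ t ht hne g with ⟨x, ⟨e, rfl⟩ | ⟨e, rfl⟩⟩ | ⟨x, y, hx, hy, h3⟩
      · cases e
        exact Or.inl ht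
      · cases e
      · right
        rcases h3 with ⟨e, rfl⟩ | ⟨e, rfl⟩ | ⟨e, rfl⟩ | ⟨e, rfl⟩ <;> cases e
        · exact ⟨y, by omega, ht⟩
        · exact ⟨x, by omega, ht⟩
    · obtain ⟨x, y, hx, hy, h3⟩ := h4 _ g
      left
      rw [h3]
      rcases (h3 _).mp (h.refl' _) with e | e | e | e <;> cases e
      · exact Or.inr (Or.inl rfl)
      · exact Or.inr (Or.inr (Or.inr rfl))

/-! ### Tensor products of building partitions -/

theorem mixP_eq {a b ta tb : ℕ} (lu : PP a ta) (ru : PP b tb) (h : PP (ta + tb) (ta + tb)) :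
    mixP lu ru h = compP (swapP (tensorP lu ru)) (compP h (tensorP lu ru)) := by
  have : tensorP (swapP lu) (swapP ru) = swapP (tensorP lu ru) := by
    apply setoid_ext
    intro u v
    rw [tensor_ll, swapP_r, tensor_ll]
    rcases u with x | x <;> rcases v with y | y <;>
    obtain ⟨i, rfl⟩ | ⟨i, rfl⟩ := fin_add_cases x <;>
    obtain ⟨j, rfl⟩ | ⟨j, rfl⟩ := fin_add_cases y <;>
    simp only [Sum.swap_inl, Sum.swap_inr, te1, te2, te3, te4, Sum.liftRel_inl_inl,
      Sum.liftRel_inr_inr, Sum.not_liftRel_inl_inr, Sum.not_liftRel_inr_inl, swapP_r]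
  rw [mixP, this]

theorem tensor_low {a b ta tb : ℕ} {lu : PP a ta} {ru : PP b tb} (h1 : LowDist lu)
    (h2 : LowDist ru) : LowDist (tensorP lu ru) := by
  intro x y h
  rw [tensor_ll] at h
  obtain ⟨i, rfl⟩ | ⟨i, rfl⟩ := fin_add_cases x <;>
  obtain ⟨j, rfl⟩ | ⟨j, rfl⟩ := fin_add_cases y <;>
  simp only [te1, te2, te3, te4, Sum.liftRel_inl_inl,
      Sum.liftRel_inr_inr, Sum.not_liftRel_inl_inr, Sum.not_liftRel_inr_inl] at h
  · rw [h1 _ _ h]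
  · rw [h2 _ _ h]

theorem tensor_sur {a b ta tb : ℕ} {lu : PP a ta} {ru : PP b tb}
    (h1 : ∀ i, ∃ x, lu.r (Sum.inl x) (Sum.inr i)) (h2 : ∀ i, ∃ x, ru.r (Sum.inl x) (Sum.inr i)) :
    ∀ i, ∃ x, (tensorP lu ru).r (Sum.inl x) (Sum.inr i) := by
  intro x
  obtain ⟨i, rfl⟩ | ⟨i, rfl⟩ := fin_add_cases x
  · obtain ⟨y, hy⟩ := h1 i
    refine ⟨Fin.castAdd _ y, ?_⟩
    rw [tensor_ll, te1, te3]
    exact Sum.LiftRel.inl hy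
  · obtain ⟨y, hy⟩ := h2 i
    refine ⟨Fin.natAdd _ y, ?_⟩
    rw [tensor_ll, te2, te4]
    exact Sum.LiftRel.inr hy

theorem tensor_c1 {a b ta tb : ℕ} (lu : PP a ta) (ru : PP b tb) (x y : Fin (a + b))
    (h : (tensorP lu ru).r (Sum.inl x) (Sum.inl y)) : ((x : ℕ) < a ↔ (y : ℕ) < a) := by
  rw [tensor_ll] at h
  obtain ⟨i, rfl⟩ | ⟨i, rfl⟩ := fin_add_cases x <;>
  obtain ⟨j, rfl⟩ | ⟨j, rfl⟩ := fin_add_cases y <;>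
  simp [te1, te2] at h ⊢

theorem tensor_c2 {a b ta tb : ℕ} (lu : PP a ta) (ru : PP b tb) (x : Fin (a + b))
    (y : Fin (ta + tb))
    (h : (tensorP lu ru).r (Sum.inl x) (Sum.inr y)) : ((x : ℕ) < a ↔ (y : ℕ) < ta) := by
  rw [tensor_ll] at h
  obtain ⟨i, rfl⟩ | ⟨i, rfl⟩ := fin_add_cases x <;>
  obtain ⟨j, rfl⟩ | ⟨j, rfl⟩ := fin_add_cases y <;>
  simp [te1, te2, te3, te4] at h ⊢

/-- The partial trace over the right leg recovers `l`. -/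
theorem trace_left {a b ta tb : ℕ} (lu : PP a ta) (ru : PP b tb) (hl : LowDist lu)
    (hl2 : ∀ i, ∃ x, lu.r (Sum.inl x) (Sum.inr i)) (hr : LowDist ru)
    (hr2 : ∀ i, ∃ x, ru.r (Sum.inl x) (Sum.inr i))
    (h : PP (ta + tb) (ta + tb)) (hh : isMixing ta tb h) :
    Setoid.comap (Sum.map (Fin.castAdd b) (Fin.castAdd b)) (mixP lu ru h ⊔ Relation.EqvGen.setoid
      (fun u v : Fin (a + b) ⊕ Fin (a + b) =>
        ∃ x : Fin (a + b), ¬ (x : ℕ) < a ∧ u = Sum.inl x ∧ v = Sum.inr x)) =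
    compP (swapP lu) lu := by
  apply setoid_ext
  intro u v
  rw [proj_iff hl, mixP_eq]
  refine (trace_mix (tensorP lu ru) (tensor_low hl hr) (tensor_sur hl2 hr2)
    (fun x => (x : ℕ) < a) (fun i => (i : ℕ) < ta) (tensor_c1 lu ru) (tensor_c2 lu ru) h
    (mixing_data hh) (Sum.map (Fin.castAdd b) (Fin.castAdd b) u)
    (Sum.map (Fin.castAdd b) (Fin.castAdd b) v) ?_ ?_).trans ?_
  · rcases u with u | u <;> simp [base]
  · rcases v with v | v <;> simp [base]
  · apply or_congr
    · rcases u with u | u <;> rcases v with v | v <;> simp [row2, tensor_ll, te1]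
    · have hb : ∀ u : Fin a ⊕ Fin a, base (Sum.map (Fin.castAdd b) (Fin.castAdd b) u) =
        Fin.castAdd b (base u) := by rintro (u | u) <;> rfl
      rw [hb, hb]
      constructor
      · rintro ⟨i, h1, h2⟩
        rw [tensor_ll, te1] at h1 h2
        obtain ⟨i, rfl⟩ | ⟨i, rfl⟩ := fin_add_cases i
        · rw [te3] at h1 h2
          exact ⟨i, by simpa using h1, by simpa using h2⟩
        · rw [te4] at h1
          cases h1
      · rintro ⟨i, h1, h2⟩
        refine ⟨Fin.castAdd _ i, ?_, ?_⟩ <;> rw [tensor_ll, te1, te3]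
        · exact Sum.LiftRel.inl h1
        · exact Sum.LiftRel.inl h2

/-- The partial trace over the left leg recovers `r`. -/
theorem trace_right {a b ta tb : ℕ} (lu : PP a ta) (ru : PP b tb) (hl : LowDist lu)
    (hl2 : ∀ i, ∃ x, lu.r (Sum.inl x) (Sum.inr i)) (hr : LowDist ru)
    (hr2 : ∀ i, ∃ x, ru.r (Sum.inl x) (Sum.inr i))
    (h : PP (ta + tb) (ta + tb)) (hh : isMixing ta tb h) :
    Setoid.comap (Sum.map (Fin.natAdd a) (Fin.natAdd a)) (mixP lu ru h ⊔ Relation.EqvGen.setoid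
      (fun u v : Fin (a + b) ⊕ Fin (a + b) =>
        ∃ x : Fin (a + b), ¬ ¬ (x : ℕ) < a ∧ u = Sum.inl x ∧ v = Sum.inr x)) =
    compP (swapP ru) ru := by
  apply setoid_ext
  intro u v
  rw [proj_iff hr, mixP_eq]
  refine (trace_mix (tensorP lu ru) (tensor_low hl hr) (tensor_sur hl2 hr2)
    (fun x => ¬ (x : ℕ) < a) (fun i => ¬ (i : ℕ) < ta)
    (fun x y h => not_congr (tensor_c1 lu ru x y h))
    (fun x y h => not_congr (tensor_c2 lu ru x y h)) h
    (mixing_data hh).neg (Sum.map (Fin.natAdd a) (Fin.natAdd a) u)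
    (Sum.map (Fin.natAdd a) (Fin.natAdd a) v) ?_ ?_).trans ?_
  · rcases u with u | u <;> simp [base]
  · rcases v with v | v <;> simp [base]
  · apply or_congr
    · rcases u with u | u <;> rcases v with v | v <;> simp [row2, tensor_ll, te2]
    · have hb : ∀ u : Fin b ⊕ Fin b, base (Sum.map (Fin.natAdd a) (Fin.natAdd a) u) =
        Fin.natAdd a (base u) := by rintro (u | u) <;> rfl
      rw [hb, hb]
      constructor
      · rintro ⟨i, h1, h2⟩
        rw [tensor_ll, te2] at h1 h2
        obtain ⟨i, rfl⟩ | ⟨i, rfl⟩ := fin_add_cases i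
        · rw [te3] at h1
          cases h1
        · rw [te4] at h1 h2
          exact ⟨i, by simpa using h1, by simpa using h2⟩
      · rintro ⟨i, h1, h2⟩
        refine ⟨Fin.natAdd _ i, ?_, ?_⟩ <;> rw [tensor_ll, te2, te4]
        · exact Sum.LiftRel.inr h1
        · exact Sum.LiftRel.inr h2

theorem mem_left {a b : ℕ} (C : PartitionCategory) (M : PP (a + b) (a + b))
    (hM : M ∈ C.mem (a + b) (a + b)) :
    Setoid.comap (Sum.map (Fin.castAdd b) (Fin.castAdd b)) (M ⊔ Relation.EqvGen.setoid
      (fun u v : Fin (a + b) ⊕ Fin (a + b) =>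
        ∃ x : Fin (a + b), ¬ (x : ℕ) < a ∧ u = Sum.inl x ∧ v = Sum.inr x)) ∈ C.mem a a := by
  have := trace_many (rotR C) b M hM
  rw [show (rotR C).eN a b = Fin.castAdd b from funext (eN_R C a b)] at this
  convert this using 10 with u v x
  constructor
  · intro h
    exact ⟨⟨x, h⟩, rfl⟩
  · rintro ⟨y, rfl⟩
    simp

theorem mem_right {a b : ℕ} (C : PartitionCategory) (M : PP (a + b) (a + b))
    (hM : M ∈ C.mem (a + b) (a + b)) :
    Setoid.comap (Sum.map (Fin.natAdd a) (Fin.natAdd a)) (M ⊔ Relation.EqvGen.setoid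
      (fun u v : Fin (a + b) ⊕ Fin (a + b) =>
        ∃ x : Fin (a + b), ¬ ¬ (x : ℕ) < a ∧ u = Sum.inl x ∧ v = Sum.inr x)) ∈ C.mem b b := by
  have := trace_many (rotL C) a _ (mem_cast C (Nat.add_comm b a) M hM)
  convert this using 1
  apply setoid_ext
  intro u v
  change _ ↔ (_ ⊔ _ : Setoid _).r (Sum.map ((rotL C).eN b a) ((rotL C).eN b a) u)
      (Sum.map ((rotL C).eN b a) ((rotL C).eN b a) v)
  rw [comap_gen]
  have e : ∀ u : Fin b ⊕ Fin b, Sum.map (Fin.cast (Nat.add_comm b a)) (Fin.cast (Nat.add_comm b a))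
      (Sum.map ((rotL C).eN b a) ((rotL C).eN b a) u) =
      Sum.map (Fin.natAdd a) (Fin.natAdd a) u := by
    rintro (u | u) <;> simp [eN_L]
  rw [e, e]
  constructor
  · refine gen_le (fun _ _ h => gen_left h) ?_ _ _
    rintro u v ⟨x, hx, rfl, rfl⟩
    refine gen_right ⟨Sum.inl (Fin.cast (Nat.add_comm a b) x),
      Sum.inr (Fin.cast (Nat.add_comm a b) x), ⟨_, ?_, rfl, rfl⟩, rfl, rfl⟩
    rintro ⟨y, hy⟩
    rw [eN_L, Fin.ext_iff] at hy
    simp at hy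
    omega
  · refine gen_le (fun _ _ h => gen_left h) ?_ _ _
    rintro u v ⟨_, _, ⟨x, hx, rfl, rfl⟩, rfl, rfl⟩
    refine gen_right ⟨Fin.cast (Nat.add_comm b a) x, ?_, rfl, rfl⟩
    intro h
    apply hx
    simp only [Fin.val_cast, not_lt] at h
    refine ⟨⟨x - a, by omega⟩, ?_⟩
    rw [eN_L, Fin.ext_iff]
    simp
    omega

/-! ### Uniqueness of the building partition -/

theorem building_upper {a t : ℕ} {u : PP a t} (hu : isBuilding u) (x y : Fin a) :
    (compP (swapP u) u).r (Sum.inl x) (Sum.inl y) ↔ u.r (Sum.inl x) (Sum.inl y) := by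
  rw [proj_iff hu.1]
  constructor
  · rintro (h | ⟨i, h1, h2⟩)
    · exact row2_base h
    · exact u.trans' h1 (u.symm' h2)
  · intro h
    exact Or.inl (Sum.LiftRel.inl h)

theorem building_thr {a t : ℕ} {u : PP a t} (hu : isBuilding u) (x : Fin a) :
    (compP (swapP u) u).r (Sum.inl x) (Sum.inr x) ↔ ∃ i, u.r (Sum.inl x) (Sum.inr i) := by
  rw [proj_iff hu.1]
  simp [row2]

theorem building_min {a t : ℕ} {u : PP a t} (hu : isBuilding u) :
    ∃ f : Fin t → Fin a, StrictMono f ∧ (∀ i, u.r (Sum.inl (f i)) (Sum.inr i)) ∧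
      Set.range f = {x | (compP (swapP u) u).r (Sum.inl x) (Sum.inr x) ∧
        ∀ y, (compP (swapP u) u).r (Sum.inl x) (Sum.inl y) → x ≤ y} := by
  have hex : ∀ i, ∃ x, IsLeast {x : Fin a | u.r (Sum.inl x) (Sum.inr i)} x := by
    intro i
    have hne : {x : Fin a | u.r (Sum.inl x) (Sum.inr i)}.Nonempty := hu.2.1 i
    exact ⟨_, wellFounded_lt.min_mem _ hne, fun y hy => wellFounded_lt.min_le hy⟩
  choose f hf using hex
  refine ⟨f, fun i j hij => hu.2.2 i j _ _ hij (hf i) (hf j), fun i => (hf i).1, ?_⟩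
  ext x
  simp only [Set.mem_range, Set.mem_setOf_eq, building_thr hu, building_upper hu]
  constructor
  · rintro ⟨i, rfl⟩
    exact ⟨⟨i, (hf i).1⟩, fun y hy => (hf i).2 (u.trans' (u.symm' hy) (hf i).1)⟩
  · rintro ⟨⟨i, hi⟩, hx⟩
    refine ⟨i, le_antisymm ((hf i).2 hi) (hx _ (u.trans' hi (u.symm' (hf i).1)))⟩

theorem building_unique {a t : ℕ} {u u' : PP a t} (hu : isBuilding u) (hu' : isBuilding u')
    (h : compP (swapP u) u = compP (swapP u') u') : u = u' := by
  obtain ⟨f, hf, hf1, hf2⟩ := building_min hu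
  obtain ⟨f', hf', hf1', hf2'⟩ := building_min hu'
  have e : f = f' := by
    rw [← StrictMono.range_inj hf hf', hf2, hf2', h]
  subst e
  have key : ∀ x y, u.r (Sum.inl x) (Sum.inl y) ↔ u'.r (Sum.inl x) (Sum.inl y) := by
    intro x y
    rw [← building_upper hu, ← building_upper hu', h]
  have key2 : ∀ x i, u.r (Sum.inl x) (Sum.inr i) ↔ u'.r (Sum.inl x) (Sum.inr i) := by
    intro x i
    constructor
    · intro h1
      exact u'.trans' ((key _ _).mp (u.trans' h1 (u.symm' (hf1 i)))) (hf1' i)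
    · intro h1
      exact u.trans' ((key _ _).mpr (u'.trans' h1 (u'.symm' (hf1' i)))) (hf1 i)
  apply setoid_ext
  rintro (x | x) (y | y)
  · exact key x y
  · exact key2 x y
  · rw [Setoid.comm' u, Setoid.comm' u']
    exact key2 y x
  · constructor
    · intro h1
      rw [hu.1 _ _ h1]
    · intro h1
      rw [hu'.1 _ _ h1]

/-- The mixing partition can be recovered from the mixed one. -/
theorem mix_inj {A T : ℕ} {U : PP A T} (hU : LowDist U)
    (hS : ∀ i, ∃ x, U.r (Sum.inl x) (Sum.inr i)) {h h' : PP T T}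
    (e : compP (swapP U) (compP h U) = compP (swapP U) (compP h' U)) : h = h' := by
  have hS2 : ∀ i, ∃ x, att2 U x i := by
    rintro (i | i)
    · obtain ⟨x, hx⟩ := hS i
      exact ⟨Sum.inl x, Sum.LiftRel.inl hx⟩
    · obtain ⟨x, hx⟩ := hS i
      exact ⟨Sum.inr x, Sum.LiftRel.inr hx⟩
  have uniq : ∀ x y i j, row2 U x y → att2 U x i → att2 U y j → i = j := by
    rintro _ _ _ _ (h | h) (h1 | h1) (h2 | h2)
    · rw [hU _ _ (U.trans' (U.symm' h1) (U.trans' h h2))]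
    · rw [hU _ _ (U.trans' (U.symm' h1) (U.trans' h h2))]
  have key : ∀ (h : PP T T) x y i j, att2 U x i → att2 U y j →
      ((compP (swapP U) (compP h U)).r x y ↔ h.r i j) := by
    intro h x y i j hx hy
    rw [mix_iff hU]
    constructor
    · rintro (h1 | ⟨i', j', h1, h2, h3⟩)
      · rw [uniq _ _ _ _ h1 hx hy]
      · rwa [uniq _ _ _ _ (row2_refl U x) hx h1, uniq _ _ _ _ (row2_refl U y) hy h2]
    · intro h1
      exact Or.inr ⟨i, j, hx, hy, h1⟩
  apply setoid_ext
  intro i j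
  obtain ⟨x, hx⟩ := hS2 i
  obtain ⟨y, hy⟩ := hS2 j
  rw [← key h x y i j hx hy, ← key h' x y i j hx hy, e]

/-! ### The order relation -/

theorem mix_le {A T : ℕ} {U : PP A T} (hU : LowDist U) (h : PP T T) :
    compP (compP (swapP U) U) (compP (swapP U) (compP h U)) = compP (swapP U) (compP h U) := by
  set M := compP (swapP U) (compP h U) with hM
  set L := compP (swapP U) U with hL
  have Mi : ∀ u v, M.r u v ↔ _ := mix_iff hU h
  have Li : ∀ u v, L.r u v ↔ _ := proj_iff hU
  apply setoid_ext
  intro u v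
  constructor
  · intro h1
    let φ : Fin A ⊕ (Fin A ⊕ Fin A) → Fin A ⊕ Fin A :=
      Sum.elim Sum.inl (Sum.elim Sum.inr Sum.inr)
    have key := bigS_le (p := M) (q := L) (t := Setoid.comap φ M) ?_ ?_ _ _ h1
    · rcases u with u | u <;> rcases v with v | v <;> exact key
    · rintro (x | x) (y | y) hxy <;> exact hxy
    · intro x y hxy
      have hφ : ∀ x, φ (Sum.inr x) = Sum.inr (base x) := by rintro (x | x) <;> rfl
      change M.r (φ _) (φ _)
      rw [hφ, hφ, Mi]
      left
      refine Sum.LiftRel.inr ?_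
      rcases (Li _ _).mp hxy with h2 | ⟨i, h2, h3⟩
      · exact row2_base h2
      · exact U.trans' h2 (U.symm' h3)
  · intro h1
    set B := bigS M L with hB
    change B.r (Sum.map id Sum.inr u) (Sum.map id Sum.inr v)
    have low : ∀ u i, att2 U u i → B.r (Sum.map id Sum.inr u) (Sum.map id Sum.inl u) := by
      rintro _ _ (hx | hx)
      · exact B.refl' _
      · refine bigS_right ?_
        rw [Li]
        exact Or.inr ⟨_, hx, hx⟩
    rcases (Mi _ _).mp h1 with h2 | ⟨i, j, h2, h3, h4⟩
    · rcases h2 with h2 | h2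
      · exact bigS_left h1
      · refine bigS_right ?_
        rw [Li]
        exact Or.inl (Sum.LiftRel.inr h2)
    · exact B.trans' (low _ _ h2) (B.trans' (bigS_left h1) (B.symm' (low _ _ h3)))

theorem tensor_proj {a b ta tb : ℕ} {lu : PP a ta} {ru : PP b tb} (hl : LowDist lu)
    (hr : LowDist ru) : tensorP (compP (swapP lu) lu) (compP (swapP ru) ru) =
      compP (swapP (tensorP lu ru)) (tensorP lu ru) := by
  apply setoid_ext
  intro u v
  rw [proj_iff (tensor_low hl hr), tensor_ll]
  have ex : ∀ P : Fin (ta + tb) → Prop, (∃ i, P i) ↔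
      (∃ i, P (Fin.castAdd tb i)) ∨ (∃ i, P (Fin.natAdd ta i)) := by
    intro P
    constructor
    · rintro ⟨i, hi⟩
      obtain ⟨i, rfl⟩ | ⟨i, rfl⟩ := fin_add_cases i
      · exact Or.inl ⟨i, hi⟩
      · exact Or.inr ⟨i, hi⟩
    · rintro (⟨i, hi⟩ | ⟨i, hi⟩) <;> exact ⟨_, hi⟩
  rw [ex]
  rcases u with x | x <;> rcases v with y | y <;>
  obtain ⟨i, rfl⟩ | ⟨i, rfl⟩ := fin_add_cases x <;>
  obtain ⟨j, rfl⟩ | ⟨j, rfl⟩ := fin_add_cases y <;>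
  simp [row2, tensor_ll, te1, te2, te3, te4, proj_iff hl, proj_iff hr]

/-- properties of the mixing operation `l ∗_h r`: (1) if `l ∗_h r` belongs
to a category of partitions then so do `l` and `r`; (2) the assignment `(l,r,h) ↦ l ∗_h r`
is injective; (3) `l ∗_h r ⪯ l ⊗ r`. -/
theorem mixing_star_properties {a b : ℕ} (l : PP a a) (r : PP b b)
    (hl : isProjective l) (hr : isProjective r)
    (lu : PP a (tP l)) (hlu : isBuilding lu) (hld : l = compP (swapP lu) lu)
    (ru : PP b (tP r)) (hru : isBuilding ru) (hrd : r = compP (swapP ru) ru)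
    (h : PP (tP l + tP r) (tP l + tP r)) (hh : isMixing (tP l) (tP r) h) :
    (∀ C : PartitionCategory, mixP lu ru h ∈ C.mem (a + b) (a + b) →
      l ∈ C.mem a a ∧ r ∈ C.mem b b) ∧
    (∀ (l' : PP a a) (r' : PP b b), isProjective l' → isProjective r' →
      ∀ (lu' : PP a (tP l')) (ru' : PP b (tP r')),
        isBuilding lu' → l' = compP (swapP lu') lu' →
        isBuilding ru' → r' = compP (swapP ru') ru' →
      ∀ h' : PP (tP l' + tP r') (tP l' + tP r'), isMixing (tP l') (tP r') h' →
        mixP lu ru h = mixP lu' ru' h' → l = l' ∧ r = r' ∧ HEq h h') ∧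
    compP (tensorP l r) (mixP lu ru h) = mixP lu ru h := by
  have e1 := trace_left lu ru hlu.1 hlu.2.1 hru.1 hru.2.1 h hh
  have e2 := trace_right lu ru hlu.1 hlu.2.1 hru.1 hru.2.1 h hh
  rw [← hld] at e1
  rw [← hrd] at e2
  refine ⟨?_, ?_, ?_⟩
  · intro C hC
    constructor
    · have := mem_left C _ hC
      rwa [e1] at this
    · have := mem_right C _ hC
      rwa [e2] at this
  · intro l' r' _ _ lu' ru' hlu' hld' hru' hrd' h' hh' heq
    have e1' := trace_left lu' ru' hlu'.1 hlu'.2.1 hru'.1 hru'.2.1 h' hh'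
    have e2' := trace_right lu' ru' hlu'.1 hlu'.2.1 hru'.1 hru'.2.1 h' hh'
    rw [← hld', ← heq, e1] at e1'
    rw [← hrd', ← heq, e2] at e2'
    clear e1 e2
    subst e1'
    subst e2'
    obtain rfl := building_unique hlu hlu' (hld.symm.trans hld')
    obtain rfl := building_unique hru hru' (hrd.symm.trans hrd')
    refine ⟨rfl, rfl, heq_of_eq ?_⟩
    rw [mixP_eq, mixP_eq] at heq
    exact mix_inj (tensor_low hlu.1 hru.1) (tensor_sur hlu.2.1 hru.2.1) heq
  · have e3 : tensorP l r = compP (swapP (tensorP lu ru)) (tensorP lu ru) :=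
      (congrArg₂ tensorP hld hrd).trans (tensor_proj hlu.1 hru.1)
    rw [e3, mixP_eq]
    exact mix_le (tensor_low hlu.1 hru.1) h
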